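/- arXiv:1104.1219 — 5 statements merged into one kernel-verified Lean document; each statement's English description precedes it below -/
import Mathlib

section
/- Let f and g be random variables taking values in the space of continuous functions on [0,1] × ℝ, such that with probability one f(s,u) = 0 and g(s,u) = 0 whenever |u| > 2. Suppose that for every finite family (s₁, k₁), …, (s_r, k_r) with s_j ∈ [0,1] and integers k_j ≥ 0, the random vectors (∫_ℝ u^{k_j} f(s_j, u) du)_{j=1}^r and (∫_ℝ u^{k_j} g(s_j, u) du)_{j=1}^r have the same distribution. Then f and g have the same distribution. -/
open MeasureTheory ProbabilityTheory

open Filter Topology in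
/-- Polynomial approximation of point evaluation on functions supported in `[-2,2]`. -/
lemma exists_poly_approx (x : ℝ) : ∃ Q : ℕ → Polynomial ℝ, ∀ N : ℕ → ℕ,
    (∀ n, (Q n).natDegree < N n) → ∀ h : ℝ → ℝ, Continuous h → (∀ u, 2 < |u| → h u = 0) →
    Tendsto (fun n => ∑ k : Fin (N n), (Q n).coeff k * ∫ v : ℝ, v ^ (k : ℕ) * h v)
      atTop (𝓝 (h x)) := by
  obtain ⟨R, hR⟩ : ∃ R, R = |x| + 2 := ⟨_, rfl⟩
  have hR2 : 2 ≤ R := by have := abs_nonneg x; linarith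
  have hxR : |x| < R := by linarith
  have hx := abs_lt.1 hxR
  let P : Polynomial ℝ := Polynomial.C (4 * R ^ 2) - (Polynomial.X - Polynomial.C x) ^ 2
  have hP : ∀ v, P.eval v = 4 * R ^ 2 - (v - x) ^ 2 := by intro v; simp [P]
  let a : ℕ → ℝ := fun n => (∫ v in Set.Icc (-R) R, (P.eval v) ^ n)⁻¹
  refine ⟨fun n => Polynomial.C (a n) * P ^ n, fun N hN h hc h0 => ?_⟩
  have key := tendsto_setIntegral_pow_smul_of_unique_maximum_of_isCompact_of_continuousOn
    (μ := volume) (s := Set.Icc (-R) R) (x₀ := x) (c := fun v => P.eval v) (g := h)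
    isCompact_Icc P.continuous.continuousOn
    (by
      intro y _ hyx
      simp only [hP]
      have : 0 < (y - x) ^ 2 := by
        have : y - x ≠ 0 := sub_ne_zero.2 hyx
        positivity
      simpa using this)
    (by
      intro y hy
      simp only [hP]
      nlinarith [hy.1, hy.2, hx.1, hx.2])
    (by simp only [hP]; nlinarith)
    (by
      rw [interior_Icc]
      exact subset_closure ⟨hx.1, hx.2⟩)
    hc.continuousOn
  refine key.congr fun n => ?_
  have hsupp : ∀ v, v ∉ Set.Icc (-R) R → h v = 0 := by
    intro v hv
    apply h0
    by_contra hcon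
    have := abs_le.1 (not_lt.1 hcon)
    exact hv ⟨by linarith [this.1], by linarith [this.2]⟩
  have hcs : HasCompactSupport h := HasCompactSupport.intro isCompact_Icc hsupp
  have hint : ∀ k : ℕ, Integrable (fun v : ℝ => v ^ k * h v) := fun k =>
    Continuous.integrable_of_hasCompactSupport (by fun_prop) hcs.mul_left
  have e1 : ∫ v in Set.Icc (-R) R, (P.eval v) ^ n • h v = ∫ v, (P.eval v) ^ n * h v := by
    simp only [smul_eq_mul]
    apply setIntegral_eq_integral_of_forall_compl_eq_zero
    intro v hv
    rw [hsupp v hv, mul_zero]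
  rw [e1, smul_eq_mul, ← integral_const_mul]
  simp_rw [← integral_const_mul]
  rw [← integral_finsetSum _ (fun (k : Fin (N n)) _ => (hint (k : ℕ)).const_mul _)]
  congr 1
  ext v
  have e2 := Polynomial.eval_eq_sum_range' (hN n) v
  rw [← Fin.sum_univ_eq_sum_range (fun i => (Polynomial.C (a n) * P ^ n).coeff i * v ^ i)] at e2
  simp only [← mul_assoc, ← Finset.sum_mul]
  rw [← e2]
  simp [a]

lemma measurable_moment {Ω : Type*} [MeasurableSpace Ω] (f : Ω → (Set.Icc (0 : ℝ) 1 × ℝ) → ℝ)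
    (hfmeas : Measurable f) (hfc : ∀ ω, Continuous (f ω)) (s : Set.Icc (0 : ℝ) 1) (k : ℕ) :
    Measurable fun ω => ∫ u : ℝ, u ^ k * f ω (s, u) := by
  have h1 : StronglyMeasurable
      (Function.uncurry fun (u : ℝ) (ω : Ω) => u ^ k * f ω (s, u)) := by
    apply stronglyMeasurable_uncurry_of_continuous_of_stronglyMeasurable
    · intro ω
      have := hfc ω
      fun_prop
    · intro u
      exact (((measurable_pi_apply (s, u)).comp hfmeas).const_mul _).stronglyMeasurable
  exact (h1.comp_measurable measurable_swap).integral_prod_right'.measurable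

/-- Almost sure limits of identically distributed vectors are identically distributed. -/
lemma map_eq_of_tendsto {Ω E : Type*} [MeasurableSpace Ω] (μ : Measure Ω) [IsProbabilityMeasure μ]
    [MeasurableSpace E] [TopologicalSpace E] [HasOuterApproxClosed E] [BorelSpace E]
    (X Y : ℕ → Ω → E) (X' Y' : Ω → E)
    (hX : ∀ n, Measurable (X n)) (hY : ∀ n, Measurable (Y n))
    (hX' : Measurable X') (hY' : Measurable Y')
    (hXY : ∀ n, μ.map (X n) = μ.map (Y n))
    (hXt : ∀ᵐ ω ∂μ, Filter.Tendsto (fun n => X n ω) Filter.atTop (nhds (X' ω)))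
    (hYt : ∀ᵐ ω ∂μ, Filter.Tendsto (fun n => Y n ω) Filter.atTop (nhds (Y' ω))) :
    μ.map X' = μ.map Y' := by
  have := Measure.isProbabilityMeasure_map (μ := μ) hX'.aemeasurable
  have := Measure.isProbabilityMeasure_map (μ := μ) hY'.aemeasurable
  apply ext_of_forall_integral_eq_of_IsFiniteMeasure
  intro φ
  have hφ : Measurable φ := φ.continuous.measurable
  have aux : ∀ (Z : ℕ → Ω → E) (Z' : Ω → E), (∀ n, Measurable (Z n)) →
      (∀ᵐ ω ∂μ, Filter.Tendsto (fun n => Z n ω) Filter.atTop (nhds (Z' ω))) →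
      Filter.Tendsto (fun n => ∫ ω, φ (Z n ω) ∂μ) Filter.atTop (nhds (∫ ω, φ (Z' ω) ∂μ)) := by
    intro Z Z' hZ hZt
    apply tendsto_integral_of_dominated_convergence (fun _ => ‖φ‖)
    · intro n
      exact (hφ.comp (hZ n)).aestronglyMeasurable
    · exact integrable_const _
    · intro n
      exact Filter.Eventually.of_forall fun ω => φ.norm_coe_le_norm _
    · filter_upwards [hZt] with ω hω
      exact (φ.continuous.tendsto _).comp hω
  rw [integral_map hX'.aemeasurable hφ.aestronglyMeasurable,
    integral_map hY'.aemeasurable hφ.aestronglyMeasurable]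
  refine tendsto_nhds_unique (aux X X' hX hXt) ?_
  refine (aux Y Y' hY hYt).congr fun n => ?_
  rw [← integral_map (hX n).aemeasurable hφ.aestronglyMeasurable,
    ← integral_map (hY n).aemeasurable hφ.aestronglyMeasurable, hXY n]

/-- Two random continuous functions on `[0,1] × ℝ`, almost surely vanishing for `|u| > 2`,
whose processes of moments `(∫_ℝ u^k f(s, u) du)_{s, k}` have the same finite-dimensional
distributions, have the same distribution. -/
theorem stmt_7
    {Ω : Type*} [MeasureSpace Ω] [IsProbabilityMeasure (ℙ : Measure Ω)]
    (f g : Ω → (Set.Icc (0 : ℝ) 1 × ℝ) → ℝ)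
    (hfmeas : Measurable f) (hgmeas : Measurable g)
    -- `f` and `g` take values in the continuous functions on `[0,1] × ℝ`
    (hfc : ∀ ω, Continuous (f ω)) (hgc : ∀ ω, Continuous (g ω))
    -- with probability one, `f(s, u) = 0` and `g(s, u) = 0` whenever `|u| > 2`
    (hf0 : ∀ᵐ ω ∂ℙ, ∀ (s : Set.Icc (0 : ℝ) 1) (u : ℝ), 2 < |u| → f ω (s, u) = 0)
    (hg0 : ∀ᵐ ω ∂ℙ, ∀ (s : Set.Icc (0 : ℝ) 1) (u : ℝ), 2 < |u| → g ω (s, u) = 0)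
    -- the finite-dimensional marginals of the moment processes coincide
    (hmom : ∀ (r : ℕ) (s : Fin r → Set.Icc (0 : ℝ) 1) (k : Fin r → ℕ),
      Measure.map (fun ω => fun j : Fin r => ∫ u : ℝ, u ^ (k j) * f ω (s j, u)) ℙ =
        Measure.map (fun ω => fun j : Fin r => ∫ u : ℝ, u ^ (k j) * g ω (s j, u)) ℙ) :
    Measure.map f ℙ = Measure.map g ℙ := by
  refine (map_eq_iff_forall_finset_map_restrict_eq (X := fun t ω => f ω t)
    (Y := fun t ω => g ω t) hfmeas.aemeasurable hgmeas.aemeasurable).2 fun I => ?_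
  choose Q hQ using exists_poly_approx
  let N : ℕ → ℕ := fun n => (Finset.univ.sup fun i : I => (Q i.1.2 n).natDegree) + 1
  have hN : ∀ (i : I) n, (Q i.1.2 n).natDegree < N n := fun i n =>
    Nat.lt_succ_of_le
      (Finset.le_sup (f := fun i : I => (Q i.1.2 n).natDegree) (Finset.mem_univ i))
  let Z : (Ω → (Set.Icc (0 : ℝ) 1 × ℝ) → ℝ) → ℕ → Ω → (I → ℝ) := fun F n ω i =>
    ∑ k : Fin (N n), (Q i.1.2 n).coeff k * ∫ v : ℝ, v ^ (k : ℕ) * F ω (i.1.1, v)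
  have hZm : ∀ F, Measurable F → (∀ ω, Continuous (F ω)) → ∀ n, Measurable (Z F n) := by
    intro F hF hFc n
    refine measurable_pi_lambda _ fun i => Finset.measurable_sum _ fun k _ => ?_
    exact (measurable_moment F hF hFc _ _).const_mul _
  have hZt : ∀ F : Ω → (Set.Icc (0 : ℝ) 1 × ℝ) → ℝ, (∀ ω, Continuous (F ω)) →
      (∀ᵐ ω ∂ℙ, ∀ (s : Set.Icc (0 : ℝ) 1) (u : ℝ), 2 < |u| → F ω (s, u) = 0) →
      ∀ᵐ ω ∂ℙ, Filter.Tendsto (fun n => Z F n ω) Filter.atTop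
        (nhds (I.restrict (fun t => F ω t))) := by
    intro F hFc hF0
    filter_upwards [hF0] with ω hω
    rw [tendsto_pi_nhds]
    intro i
    have hc := hFc ω
    exact hQ i.1.2 N (hN i) (fun v => F ω (i.1.1, v)) (by fun_prop) (hω i.1.1)
  refine map_eq_of_tendsto ℙ (Z f) (Z g) _ _ (hZm f hfmeas hfc) (hZm g hgmeas hgc)
    ((Finset.measurable_restrict I).comp hfmeas) ((Finset.measurable_restrict I).comp hgmeas)
    (fun n => ?_) (hZt f hfc hf0) (hZt g hgc hg0)
  let e := Fintype.equivFin (I × Fin (N n))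
  let s : Fin (Fintype.card (I × Fin (N n))) → Set.Icc (0 : ℝ) 1 := fun j => (e.symm j).1.1.1
  let κ : Fin (Fintype.card (I × Fin (N n))) → ℕ := fun j => (e.symm j).2
  let L : (Fin (Fintype.card (I × Fin (N n))) → ℝ) → (I → ℝ) := fun y i =>
    ∑ k : Fin (N n), (Q i.1.2 n).coeff k * y (e (i, k))
  have hL : Measurable L := by
    refine measurable_pi_lambda _ fun i => Finset.measurable_sum _ fun k _ => ?_
    exact (measurable_pi_apply _).const_mul _
  have hZL : ∀ F, Z F n = L ∘ fun ω => fun j => ∫ u : ℝ, u ^ (κ j) * F ω (s j, u) := by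
    intro F
    ext ω i
    simp [Z, L, κ, s]
  rw [hZL f, hZL g, ← Measure.map_map hL, ← Measure.map_map hL, hmom]
  · exact measurable_pi_lambda _ fun j => measurable_moment g hgmeas hgc _ _
  · exact measurable_pi_lambda _ fun j => measurable_moment f hfmeas hfc _ _
end

section
/- Let f be a random variable taking values in the space of continuous functions on [0,1] × ℝ, such that with probability one f(s,u) = 0 whenever |u| > 2. Suppose that for every finite family (s₁, k₁), …, (s_r, k_r) with s_j ∈ [0,1] and integers k_j ≥ 0 and all reals a₁, …, a_r, the random variable ∑_{j=1}^r a_j ∫_ℝ u^{k_j} f(s_j, u) du is a centered real Gaussian random variable (possibly degenerate, i.e. almost surely 0). Then for every finite family (s₁,u₁), …, (s_r,u_r) ∈ [0,1] × ℝ and all reals b₁, …, b_r, the random variable ∑_{j=1}^r b_j f(s_j, u_j) is a centered real Gaussian random variable (possibly degenerate). -/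
open MeasureTheory ProbabilityTheory

/-- A real random variable `Z` is centered Gaussian (possibly degenerate) if its law is
`N(0, v)` for some `v ≥ 0` (with `N(0,0)` the Dirac mass at `0`). -/
def IsCenteredGaussianRV {Ω : Type*} [MeasureSpace Ω] (Z : Ω → ℝ) : Prop :=
  ∃ v : NNReal, Measure.map Z ℙ = ProbabilityTheory.gaussianReal 0 v


open Filter Topology in
/-- An almost sure limit of centered Gaussian variables is centered Gaussian. -/
theorem IsCenteredGaussianRV.of_tendsto_ae {Ω : Type*} [MeasureSpace Ω]
    [IsProbabilityMeasure (ℙ : Measure Ω)] (Z : ℕ → Ω → ℝ) (Y : Ω → ℝ)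
    (hZ : ∀ n, IsCenteredGaussianRV (Z n))
    (hlim : ∀ᵐ ω ∂(ℙ : Measure Ω), Tendsto (fun n => Z n ω) atTop (𝓝 (Y ω))) :
    IsCenteredGaussianRV Y := by
  choose v hv using hZ
  have hm : ∀ n, AEMeasurable (Z n) ℙ := fun n =>
    AEMeasurable.of_map_ne_zero (by rw [hv n]; exact IsProbabilityMeasure.ne_zero _)
  have hY : AEMeasurable Y ℙ := aemeasurable_of_tendsto_metrizable_ae atTop hm hlim
  have : IsProbabilityMeasure (Measure.map Y ℙ) := Measure.isProbabilityMeasure_map hY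
  have hchar : ∀ (X : Ω → ℝ), AEMeasurable X ℙ → ∀ t : ℝ,
      charFun (Measure.map X ℙ) t = ∫ ω, Complex.exp (t * X ω * Complex.I) := by
    intro X hX t
    rw [charFun_apply_real, integral_map hX (by fun_prop)]
  have hnorm : ∀ a b : ℝ, ‖Complex.exp (a * b * Complex.I)‖ = 1 := by
    intro a b
    have := Complex.norm_exp_ofReal_mul_I (a * b)
    simpa using this
  have hconv : ∀ t : ℝ, Tendsto (fun n => Complex.exp (-(v n * t ^ 2 / 2))) atTop
      (𝓝 (charFun (Measure.map Y ℙ) t)) := by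
    intro t
    have h1 : ∀ n, Complex.exp (-(v n * t ^ 2 / 2)) =
        ∫ ω, Complex.exp (t * Z n ω * Complex.I) := by
      intro n
      rw [← hchar _ (hm n), hv n, charFun_gaussianReal]
      simp
    simp_rw [h1]
    rw [hchar Y hY]
    refine tendsto_integral_of_dominated_convergence (fun _ => (1 : ℝ)) ?_ (integrable_const _) ?_ ?_
    · intro n
      have := hm n
      exact AEMeasurable.aestronglyMeasurable (by fun_prop)
    · intro n
      exact Eventually.of_forall fun ω => (hnorm _ _).le
    · filter_upwards [hlim] with ω hω
      have : Continuous fun x : ℝ => Complex.exp (t * x * Complex.I) := by fun_prop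
      exact (this.tendsto _).comp hω
  have hcont : Tendsto (fun n : ℕ => charFun (Measure.map Y ℙ) (1 / ((n : ℝ) + 1))) atTop
      (𝓝 1) := by
    have h0 : (1 : ℂ) = ∫ ω, (fun _ : Ω => (1 : ℂ)) ω ∂(ℙ : Measure Ω) := by simp
    rw [h0]
    simp_rw [hchar Y hY]
    refine tendsto_integral_of_dominated_convergence (fun _ => (1 : ℝ)) ?_ (integrable_const _) ?_ ?_
    · intro n
      exact AEMeasurable.aestronglyMeasurable (by fun_prop)
    · intro n
      exact Eventually.of_forall fun ω => (hnorm _ _).le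
    · refine Eventually.of_forall fun ω => ?_
      have hc : Continuous fun x : ℝ => Complex.exp (x * Y ω * Complex.I) := by fun_prop
      have := (hc.tendsto 0).comp (tendsto_one_div_add_atTop_nhds_zero_nat (𝕜 := ℝ))
      simpa [Function.comp_def] using this
  obtain ⟨N, hN⟩ := (hcont.eventually_ne one_ne_zero).exists
  set t₀ : ℝ := 1 / ((N : ℝ) + 1) with ht₀
  have ht₀pos : 0 < t₀ := by positivity
  have hR : Tendsto (fun n => Real.exp (-((v n : ℝ) * t₀ ^ 2 / 2))) atTop
      (𝓝 ‖charFun (Measure.map Y ℙ) t₀‖) := by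
    have := (hconv t₀).norm
    refine this.congr fun n => ?_
    rw [Complex.norm_exp]
    congr 1
    have : (-((v n : ℂ) * (t₀ : ℂ) ^ 2 / 2)) = ((-((v n : ℝ) * t₀ ^ 2 / 2) : ℝ) : ℂ) := by
      push_cast; rfl
    rw [this, Complex.ofReal_re]
  have hlog := hR.log (norm_ne_zero_iff.2 hN)
  simp only [Real.log_exp] at hlog
  obtain ⟨w, hw⟩ : ∃ w : ℝ, Tendsto (fun n => (v n : ℝ)) atTop (𝓝 w) := by
    refine ⟨_, (hlog.mul_const (-2 / t₀ ^ 2)).congr fun n => ?_⟩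
    field_simp
  have hw0 : 0 ≤ w := ge_of_tendsto' hw fun n => (v n).2
  lift w to NNReal using hw0
  refine ⟨w, Measure.ext_of_charFun (funext fun t => ?_)⟩
  refine tendsto_nhds_unique (hconv t) ?_
  rw [charFun_gaussianReal]
  have hc : Continuous fun x : ℝ => Complex.exp (-((x : ℂ) * t ^ 2 / 2)) := by fun_prop
  have := (hc.tendsto (w : ℝ)).comp hw
  simpa [Function.comp_def] using this

open Filter Topology in
/-- Point evaluation as a limit of integrals against polynomials. -/
theorem exists_polynomial_approx_eval (x : ℝ) : ∃ p : ℕ → Polynomial ℝ,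
    ∀ h : ℝ → ℝ, Continuous h → (∀ u, 2 < |u| → h u = 0) →
      Tendsto (fun n => ∫ u, (p n).eval u * h u) atTop (𝓝 (h x)) := by
  let φ : ℕ → ContDiffBump (0 : ℝ) := fun n =>
    ⟨1 / ((n : ℝ) + 1) / 2, 1 / ((n : ℝ) + 1), by positivity, by
      have : (0 : ℝ) < 1 / ((n : ℝ) + 1) := by positivity
      linarith⟩
  let g : ℕ → ℝ → ℝ := fun n u => (φ n).normed volume (x - u)
  have hg : ∀ n, Continuous (g n) := fun n =>
    (φ n).continuous_normed.comp (continuous_const.sub continuous_id)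
  have hp : ∀ n : ℕ, ∃ p : Polynomial ℝ, ∀ u ∈ Set.Icc (-2 : ℝ) 2,
      |p.eval u - g n u| < 1 / ((n : ℝ) + 1) := fun n =>
    exists_polynomial_near_of_continuousOn _ _ _ (hg n).continuousOn _ (by positivity)
  choose p hp using hp
  refine ⟨p, fun h hc h0 => ?_⟩
  have hsupp : HasCompactSupport h := by
    refine HasCompactSupport.intro (K := Set.Icc (-2 : ℝ) 2) isCompact_Icc fun u hu => h0 u ?_
    by_contra hcon
    exact hu (abs_le.1 (not_lt.1 hcon))
  have hint : Integrable h := hc.integrable_of_hasCompactSupport hsupp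
  have hintm : ∀ q : ℝ → ℝ, Continuous q → Integrable fun u => q u * h u := fun q hq =>
    (hq.mul hc).integrable_of_hasCompactSupport hsupp.mul_left
  have h1 : Tendsto (fun n => ∫ u, g n u * h u) atTop (𝓝 (h x)) := by
    have := ContDiffBump.convolution_tendsto_right_of_continuous (μ := volume) (φ := φ) (g := h)
      (l := atTop) (tendsto_one_div_add_atTop_nhds_zero_nat (𝕜 := ℝ)) hc x
    refine this.congr fun n => ?_
    rw [convolution_lsmul_swap]
    rfl
  have h2 : Tendsto (fun n => (∫ u, (p n).eval u * h u) - ∫ u, g n u * h u) atTop (𝓝 0) := by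
    have h3 : Tendsto (fun n : ℕ => 1 / ((n : ℝ) + 1) * ∫ u, ‖h u‖) atTop (𝓝 0) := by
      simpa using (tendsto_one_div_add_atTop_nhds_zero_nat (𝕜 := ℝ)).mul_const (∫ u, ‖h u‖)
    refine squeeze_zero_norm (fun n => ?_) h3
    rw [← integral_sub (hintm _ (p n).continuous) (hintm _ (hg n)), ← integral_const_mul]
    refine norm_integral_le_of_norm_le (hint.norm.const_mul _) (Eventually.of_forall fun u => ?_)
    rw [← sub_mul, norm_mul]
    by_cases hu : 2 < |u|
    · simp [h0 u hu]
    · exact mul_le_mul_of_nonneg_right (hp n u (abs_le.1 (not_lt.1 hu))).le (norm_nonneg _)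
  simpa using h2.add h1

/-- If `f` is a random continuous function on `[0,1] × ℝ`, almost surely vanishing for
`|u| > 2`, such that all finite linear combinations of the moment variables
`∫_ℝ u^k f(s, u) du` are centered Gaussian, then all finite linear combinations of the
point evaluations `f(s, u)` are centered Gaussian. -/
theorem stmt_8
    {Ω : Type*} [MeasureSpace Ω] [IsProbabilityMeasure (ℙ : Measure Ω)]
    (f : Ω → (Set.Icc (0 : ℝ) 1 × ℝ) → ℝ)
    (hfmeas : Measurable f)
    -- `f` takes values in the continuous functions on `[0,1] × ℝ`
    (hfc : ∀ ω, Continuous (f ω))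
    -- with probability one, `f(s, u) = 0` whenever `|u| > 2`
    (hf0 : ∀ᵐ ω ∂ℙ, ∀ (s : Set.Icc (0 : ℝ) 1) (u : ℝ), 2 < |u| → f ω (s, u) = 0)
    -- every finite linear combination of the moment variables is centered Gaussian
    (hmom : ∀ (r : ℕ) (s : Fin r → Set.Icc (0 : ℝ) 1) (k : Fin r → ℕ) (a : Fin r → ℝ),
      IsCenteredGaussianRV
        (fun ω => ∑ j : Fin r, a j * ∫ u : ℝ, u ^ (k j) * f ω (s j, u))) :
    -- then every finite linear combination of point evaluations of `f` is centered Gaussian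
    ∀ (r : ℕ) (pt : Fin r → Set.Icc (0 : ℝ) 1 × ℝ) (b : Fin r → ℝ),
      IsCenteredGaussianRV (fun ω => ∑ j : Fin r, b j * f ω (pt j)) := by
  intro r pt b
  have hmom' : ∀ (ι : Type) [Fintype ι] (s : ι → Set.Icc (0 : ℝ) 1) (k : ι → ℕ) (a : ι → ℝ),
      IsCenteredGaussianRV
        (fun ω => ∑ j : ι, a j * ∫ u : ℝ, u ^ (k j) * f ω (s j, u)) := by
    intro ι _ s k a
    have e := (Fintype.equivFin ι).symm
    have := hmom _ (fun i => s (e i)) (fun i => k (e i)) (fun i => a (e i))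
    convert this using 2 with ω
    exact (Equiv.sum_comp e (fun j => a j * ∫ u : ℝ, u ^ (k j) * f ω (s j, u))).symm
  choose p hp using fun j : Fin r => exists_polynomial_approx_eval (pt j).2
  refine IsCenteredGaussianRV.of_tendsto_ae
    (fun n ω => ∑ i : (Σ j : Fin r, Fin ((p j n).natDegree + 1)),
      (b i.1 * (p i.1 n).coeff i.2) * ∫ u : ℝ, u ^ (i.2 : ℕ) * f ω ((pt i.1).1, u)) _
    (fun n => hmom' (Σ j : Fin r, Fin ((p j n).natDegree + 1)) (fun i => (pt i.1).1) (fun i => (i.2 : ℕ)) _) ?_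
  filter_upwards [hf0] with ω hω
  have hc : ∀ s, Continuous fun u => f ω (s, u) := fun s => (hfc ω).comp (by fun_prop)
  have hint : ∀ s (k : ℕ), Integrable fun u => u ^ k * f ω (s, u) := by
    intro s k
    have hsupp : HasCompactSupport fun u => f ω (s, u) := by
      refine HasCompactSupport.intro (K := Set.Icc (-2 : ℝ) 2) isCompact_Icc
        fun u hu => hω s u ?_
      by_contra hcon
      exact hu (abs_le.1 (not_lt.1 hcon))
    exact ((continuous_pow k).mul (hc s)).integrable_of_hasCompactSupport hsupp.mul_left
  have hlim := tendsto_finsetSum Finset.univ fun (j : Fin r) _ =>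
    (hp j (fun u => f ω ((pt j).1, u)) (hc _) (hω _)).const_mul (b j)
  refine hlim.congr fun n => ?_
  rw [Fintype.sum_sigma]
  refine Finset.sum_congr rfl fun j _ => ?_
  simp_rw [mul_assoc, ← Finset.mul_sum]
  congr 1
  simp_rw [← integral_const_mul]
  rw [← integral_finsetSum _ fun i _ => (hint _ _).const_mul _]
  congr 1
  ext u
  rw [Polynomial.eval_eq_sum_range, Finset.sum_mul, Finset.sum_range]
  simp_rw [mul_assoc]
end

section
/- Fix an integer p ≥ 1 and integers k₁, …, k_p ≥ 1. Let E be the disjoint union of the sets {0, 1, …, k_ℓ} for ℓ = 1, …, p, writing m̄^ℓ for the element m of the ℓ-th copy. Let π be a partition of E, write π(x) for the block of π containing x, and let G_π be the graph whose vertices are the blocks of π and whose edges are the pairs {π((m−1)̄^ℓ), π(m̄^ℓ)} for 1 ≤ ℓ ≤ p and 1 ≤ m ≤ k_ℓ; for each ℓ, the ℓ-th walk is the sequence of vertices (π(0̄^ℓ), π(1̄^ℓ), …, π(k̄_ℓ^ℓ)). Assume: (i) π(0̄^ℓ) = π(k̄_ℓ^ℓ) for every ℓ; (ii) every edge of G_π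 is traversed at least twice in total by the p walks; (iii) for every ℓ there exists ℓ' ≠ ℓ such that some edge of G_π is traversed both by the ℓ-th walk and by the ℓ'-th walk. Then the number c_π of connected components of G_π satisfies c_π ≤ p/2, and the number |π| of blocks of π satisfies |π| ≤ c_π − p/2 + (k₁ + ⋯ + k_p)/2. -/
/-- The elements of the index set `E = ⨿_ℓ {0, 1, …, k_ℓ}`. -/
abbrev WalkIndex (p : ℕ) (k : Fin p → ℕ) : Type := (ℓ : Fin p) × Fin (k ℓ + 1)

/-- The steps of the `p` walks: the step `(ℓ, m)` goes from `(m-1)^ℓ` to `m^ℓ`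
(for `1 ≤ m ≤ k_ℓ`, encoded by `m : Fin (k ℓ)`). -/
abbrev WalkStep (p : ℕ) (k : Fin p → ℕ) : Type := (ℓ : Fin p) × Fin (k ℓ)

/-- The edge of the graph `G_π` (whose vertices are the blocks of `π`, i.e. the elements of
the quotient of `E` by `π`) traversed by the step `q`. -/
def stepEdge {p : ℕ} {k : Fin p → ℕ} (π : Setoid (WalkIndex p k)) (q : WalkStep p k) :
    Sym2 (Quotient π) :=
  s(Quotient.mk π ⟨q.1, q.2.castSucc⟩, Quotient.mk π ⟨q.1, q.2.succ⟩)

/-- Two vertices of `G_π` are adjacent when some step traverses the edge joining them. -/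
def stepAdj {p : ℕ} {k : Fin p → ℕ} (π : Setoid (WalkIndex p k)) (a b : Quotient π) : Prop :=
  ∃ q : WalkStep p k, stepEdge π q = s(a, b)

/-- The equivalence relation generated by a set of edges. -/
def genS {V : Type*} (F : Set (Sym2 V)) : Setoid V :=
  Relation.EqvGen.setoid (fun a b => s(a, b) ∈ F)

theorem genS_mono {V : Type*} {F : Set (Sym2 V)} (s : Setoid V)
    (h : ∀ a b, s(a, b) ∈ F → s a b) {x y : V} (hxy : genS F x y) : s x y := by
  change Relation.EqvGen _ x y at hxy
  induction hxy with
  | rel x y h' => exact h _ _ h'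
  | refl x => exact s.refl' x
  | symm x y _ ih => exact s.symm' ih
  | trans x y z _ _ ih1 ih2 => exact s.trans' ih1 ih2

theorem genS_rel {V : Type*} {F : Set (Sym2 V)} {a b : V} (h : s(a, b) ∈ F) : genS F a b :=
  Relation.EqvGen.rel _ _ h

theorem genS_insert {V : Type*} (F : Set (Sym2 V)) (a b x y : V)
    (h : genS (insert s(a, b) F) x y) :
    genS F x y ∨ ((genS F x a ∨ genS F x b) ∧ (genS F y a ∨ genS F y b)) := by
  change Relation.EqvGen _ x y at h
  induction h with
  | rel x y h' =>
    rcases h' with h' | h'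
    · right
      rw [Sym2.eq_iff] at h'
      rcases h' with ⟨rfl, rfl⟩ | ⟨rfl, rfl⟩
      · exact ⟨Or.inl ((genS F).refl' _), Or.inr ((genS F).refl' _)⟩
      · exact ⟨Or.inr ((genS F).refl' _), Or.inl ((genS F).refl' _)⟩
    · exact Or.inl (genS_rel h')
  | refl x => exact Or.inl ((genS F).refl' x)
  | symm x y _ ih =>
    rcases ih with h | ⟨h, h'⟩
    · exact Or.inl ((genS F).symm' h)
    · exact Or.inr ⟨h', h⟩
  | trans x y z _ _ ih1 ih2 =>
    rcases ih1 with h | ⟨h, h'⟩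
    · rcases ih2 with g | ⟨g, g'⟩
      · exact Or.inl ((genS F).trans' h g)
      · exact Or.inr ⟨g.imp ((genS F).trans' h) ((genS F).trans' h), g'⟩
    · rcases ih2 with g | ⟨g, g'⟩
      · exact Or.inr ⟨h, h'.imp ((genS F).trans' ((genS F).symm' g))
          ((genS F).trans' ((genS F).symm' g))⟩
      · exact Or.inr ⟨h, g'⟩

theorem genS_card_insert {V : Type*} [Finite V] (F : Set (Sym2 V)) (e : Sym2 V) :
    Nat.card (Quotient (genS F)) ≤ Nat.card (Quotient (genS (insert e F))) + 1 := by
  classical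
  induction e with
  | _ a b =>
  let g : Quotient (genS F) → Quotient (genS (insert s(a, b) F)) :=
    Quotient.map' id (fun x y h => genS_mono (genS (insert s(a, b) F))
      (fun u v huv => genS_rel (Set.mem_insert_of_mem _ huv)) h)
  let φ : Quotient (genS F) → Option (Quotient (genS (insert s(a, b) F))) :=
    fun c => if c = Quotient.mk (genS F) a then none else some (g c)
  have hφ : Function.Injective φ := by
    intro c d
    induction c using Quotient.inductionOn with | _ x =>
    induction d using Quotient.inductionOn with | _ y =>
    intro h
    simp only [φ] at h
    split_ifs at h with h1 h2 h2
    · rw [h1, h2]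
    · have h' : genS (insert s(a, b) F) x y := Quotient.exact (Option.some.inj h)
      have n1 : ¬ genS F x a := fun t => h1 (Quotient.sound t)
      have n2 : ¬ genS F y a := fun t => h2 (Quotient.sound t)
      apply Quotient.sound
      rcases genS_insert F a b x y h' with t | ⟨t, t'⟩
      · exact t
      · exact (genS F).trans' (t.resolve_left n1) ((genS F).symm' (t'.resolve_left n2))
  have := Nat.card_le_card_of_injective φ hφ
  rwa [Finite.card_option] at this

theorem genS_card {V : Type*} [Finite V] (F : Finset (Sym2 V)) :
    Nat.card V ≤ Nat.card (Quotient (genS (F : Set (Sym2 V)))) + F.card := by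
  classical
  induction F using Finset.induction_on with
  | empty =>
    apply Nat.card_le_card_of_injective (fun v => Quotient.mk (genS _) v)
    intro x y h
    exact genS_mono (⊥ : Setoid V) (by simp) (Quotient.exact h)
  | insert e F he ih =>
    have := genS_card_insert (F : Set (Sym2 V)) e
    rw [Finset.card_insert_of_notMem he, Finset.coe_insert]
    omega

theorem exists_forest {V : Type*} [Finite V] (E : Finset (Sym2 V)) :
    ∃ F ⊆ E, Nat.card V ≤ Nat.card (Quotient (genS (E : Set (Sym2 V)))) + F.card ∧
      ∀ e ∈ F, ∃ f : V → Prop, (∀ x y, s(x, y) ∈ F → s(x, y) ≠ e → (f x ↔ f y)) ∧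
        (∀ x y, s(x, y) = e → ¬ (f x ↔ f y)) := by
  classical
  obtain ⟨F, hF⟩ := Finset.exists_minimal
    (s := E.powerset.filter (fun F : Finset (Sym2 V) => genS (F : Set (Sym2 V)) = genS (E : Set (Sym2 V))))
    ⟨E, by simp⟩
  obtain ⟨hFm, hmin⟩ := hF
  simp only [Finset.mem_filter, Finset.mem_powerset] at hFm hmin
  refine ⟨F, hFm.1, hFm.2 ▸ genS_card F, ?_⟩
  intro e he
  induction e with
  | _ a b =>
  have hn : ¬ genS ((F.erase s(a, b) : Finset _) : Set (Sym2 V)) a b := by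
    intro hab
    have h1 : genS ((F.erase s(a, b) : Finset _) : Set (Sym2 V)) = genS (F : Set (Sym2 V)) := by
      ext x y
      constructor
      · apply genS_mono
        intro u v huv
        exact genS_rel (Finset.mem_of_mem_erase (Finset.mem_coe.1 huv))
      · apply genS_mono
        intro u v huv
        by_cases hu : s(u, v) = s(a, b)
        · rw [Sym2.eq_iff] at hu
          rcases hu with ⟨rfl, rfl⟩ | ⟨rfl, rfl⟩
          · exact hab
          · exact Setoid.symm' _ hab
        · exact genS_rel (Finset.mem_coe.2 (Finset.mem_erase.2 ⟨hu, huv⟩))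
    have := hmin ⟨(Finset.erase_subset _ _).trans hFm.1, h1.trans hFm.2⟩ (Finset.erase_subset _ _)
    exact Finset.notMem_erase _ _ (this he)
  refine ⟨fun x => genS ((F.erase s(a, b) : Finset _) : Set (Sym2 V)) a x, ?_, ?_⟩
  · intro x y hxy hne
    have : genS ((F.erase s(a, b) : Finset _) : Set (Sym2 V)) x y :=
      genS_rel (Finset.mem_coe.2 (Finset.mem_erase.2 ⟨hne, hxy⟩))
    exact ⟨fun t => Setoid.trans' _ t this, fun t => Setoid.trans' _ t (Setoid.symm' _ this)⟩
  · intro x y hxy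
    rw [Sym2.eq_iff] at hxy
    have := Setoid.refl' (genS ((F.erase s(a, b) : Finset _) : Set (Sym2 V))) a
    rcases hxy with ⟨rfl, rfl⟩ | ⟨rfl, rfl⟩
    · exact fun t => hn (t.1 this)
    · exact fun t => hn (t.2 this)

/-- A closed sequence which changes side at step `m` changes side at another step. -/
theorem exists_other_step {n : ℕ} (f : Fin (n + 1) → Prop) (h0 : f 0 ↔ f (Fin.last n))
    (m : Fin n) (hm : ¬ (f m.castSucc ↔ f m.succ)) :
    ∃ m' : Fin n, m' ≠ m ∧ ¬ (f m'.castSucc ↔ f m'.succ) := by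
  by_contra! hc
  have key : ∀ i : Fin (n + 1), (i ≤ m.castSucc → (f i ↔ f 0)) ∧
      (m.castSucc < i → (f i ↔ f m.succ)) := by
    intro i
    induction i using Fin.induction with
    | zero => exact ⟨fun _ => Iff.rfl, fun h => absurd h (by simp)⟩
    | succ i ih =>
      rcases lt_trichotomy i m with h | h | h
      · have e := hc i h.ne
        refine ⟨fun _ => e.symm.trans (ih.1 (by simpa using h.le)), fun h' => ?_⟩
        simp only [Fin.lt_def, Fin.val_castSucc, Fin.val_succ] at h h'
        omega
      · subst h
        refine ⟨fun h' => ?_, fun _ => Iff.rfl⟩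
        simp only [Fin.le_def, Fin.val_castSucc, Fin.val_succ] at h'
        omega
      · have e := hc i h.ne'
        refine ⟨fun h' => ?_, fun _ => e.symm.trans (ih.2 (by simpa using h))⟩
        simp only [Fin.lt_def, Fin.le_def, Fin.val_castSucc, Fin.val_succ] at h h'
        omega
  have k1 := (key m.castSucc).1 le_rfl
  have k2 := (key (Fin.last n)).2 (Fin.castSucc_lt_last m)
  exact hm (k1.trans (h0.trans k2))

theorem stmt_9 (p : ℕ) (hp : 1 ≤ p) (k : Fin p → ℕ) (hk : ∀ ℓ, 1 ≤ k ℓ)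
    (π : Setoid (WalkIndex p k))
    -- (i) each walk starts and ends at the same vertex
    (h1 : ∀ ℓ : Fin p,
      Quotient.mk π (⟨ℓ, 0⟩ : WalkIndex p k) = Quotient.mk π ⟨ℓ, Fin.last (k ℓ)⟩)
    -- (ii) every edge of `G_π` is traversed at least twice in total by the `p` walks
    (h2 : ∀ q₀ : WalkStep p k, 2 ≤ Nat.card {q : WalkStep p k // stepEdge π q = stepEdge π q₀})
    -- (iii) every walk shares an edge with some other walk
    (h3 : ∀ ℓ : Fin p, ∃ ℓ' : Fin p, ℓ' ≠ ℓ ∧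
      ∃ (m : Fin (k ℓ)) (m' : Fin (k ℓ')), stepEdge π ⟨ℓ, m⟩ = stepEdge π ⟨ℓ', m'⟩) :
    -- then `c_π ≤ p/2` and `|π| ≤ c_π - p/2 + (k₁ + ⋯ + k_p)/2`
    2 * Nat.card (Quotient (Relation.EqvGen.setoid (stepAdj π))) ≤ p ∧
      2 * Nat.card (Quotient π) + p ≤
        2 * Nat.card (Quotient (Relation.EqvGen.setoid (stepAdj π))) + ∑ ℓ : Fin p, k ℓ := by
  classical
  set E : Finset (Sym2 (Quotient π)) := Finset.univ.image (stepEdge π) with hE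
  have hEm : ∀ q, stepEdge π q ∈ E := fun q => Finset.mem_image_of_mem _ (Finset.mem_univ q)
  have hS : Relation.EqvGen.setoid (stepAdj π) = genS (E : Set (Sym2 (Quotient π))) := by
    unfold genS
    congr 1
    ext a b
    simp only [stepAdj, hE, Finset.coe_image, Finset.coe_univ, Set.image_univ, Set.mem_range]
  rw [hS]
  -- all vertices of one walk are in the same component
  have hconn : ∀ (ℓ : Fin p) (i : Fin (k ℓ + 1)), genS (E : Set (Sym2 (Quotient π)))
      (Quotient.mk π ⟨ℓ, 0⟩) (Quotient.mk π ⟨ℓ, i⟩) := by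
    intro ℓ i
    induction i using Fin.induction with
    | zero => exact Setoid.refl' _ _
    | succ i ih => exact Setoid.trans' _ ih (genS_rel (Finset.mem_coe.2 (hEm ⟨ℓ, i⟩)))
  constructor
  · let φ : Fin p → Quotient (genS (E : Set (Sym2 (Quotient π)))) :=
      fun ℓ => Quotient.mk _ (Quotient.mk π ⟨ℓ, 0⟩)
    have hsurj : ∀ c, ∃ ℓ, φ ℓ = c := by
      intro c
      induction c using Quotient.inductionOn with | _ v =>
      induction v using Quotient.inductionOn with | _ x =>
      exact ⟨x.1, Quotient.sound (hconn x.1 x.2)⟩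
    have : Fintype (Quotient (genS (E : Set (Sym2 (Quotient π))))) := Fintype.ofFinite _
    rw [Nat.card_eq_fintype_card]
    have := Finset.mul_card_image_le_card_of_maps_to (f := φ) (s := Finset.univ)
      (t := Finset.univ) (fun _ _ => Finset.mem_univ _) 2 (by
        intro c _
        obtain ⟨ℓ, rfl⟩ := hsurj c
        obtain ⟨ℓ', hne, m, m', he⟩ := h3 ℓ
        refine Finset.one_lt_card.2 ⟨ℓ, by simp, ℓ', ?_, hne.symm⟩
        simp only [Finset.mem_filter, Finset.mem_univ, true_and]
        apply Quotient.sound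
        have a1 := hconn ℓ m.castSucc
        have a2 := hconn ℓ m.succ
        have a3 := hconn ℓ' m'.castSucc
        unfold stepEdge at he
        rw [Sym2.eq_iff] at he
        rcases he with ⟨h, _⟩ | ⟨h, _⟩
        · rw [h] at a1
          exact Setoid.trans' _ a3 (Setoid.symm' _ a1)
        · have a4 := hconn ℓ' m'.succ
          rw [h] at a1
          exact Setoid.trans' _ a4 (Setoid.symm' _ a1))
    simpa using this
  · obtain ⟨F, hFE, hcard, hsep⟩ := exists_forest E
    have hz : ∀ ℓ, ∃ m : Fin (k ℓ), stepEdge π ⟨ℓ, m⟩ ∈ F →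
        (∀ i, stepEdge π ⟨ℓ, i⟩ ∈ F) ∧
        ∃ ℓ', ℓ' ≠ ℓ ∧ ∃ m', stepEdge π ⟨ℓ, m⟩ = stepEdge π ⟨ℓ', m'⟩ := by
      intro ℓ
      by_cases hb : ∀ i, stepEdge π ⟨ℓ, i⟩ ∈ F
      · obtain ⟨ℓ', hne, m, m', he⟩ := h3 ℓ
        exact ⟨m, fun _ => ⟨hb, ℓ', hne, m', he⟩⟩
      · push Not at hb
        obtain ⟨i, hi⟩ := hb
        exact ⟨i, fun h => absurd h hi⟩
    choose z hz using hz
    let Z : Finset (WalkStep p k) := Finset.univ.image (fun ℓ => ⟨ℓ, z ℓ⟩)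
    have hZc : Z.card = p := by
      rw [Finset.card_image_of_injective]
      · simp
      · intro a b h
        exact congrArg Sigma.fst h
    have hZm : ∀ ℓ m, (⟨ℓ, m⟩ : WalkStep p k) ∈ Z → m = z ℓ := by
      intro ℓ m h
      simp only [Z, Finset.mem_image, Finset.mem_univ, true_and] at h
      obtain ⟨a, ha⟩ := h
      cases ha
      rfl
    have hother : ∀ ℓ, stepEdge π ⟨ℓ, z ℓ⟩ ∈ F → ∃ m, m ≠ z ℓ ∧
        stepEdge π ⟨ℓ, m⟩ = stepEdge π ⟨ℓ, z ℓ⟩ := by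
      intro ℓ hF
      obtain ⟨hall, -⟩ := hz ℓ hF
      obtain ⟨f, hf1, hf2⟩ := hsep _ hF
      obtain ⟨m, hm, hm'⟩ := exists_other_step (fun i => f (Quotient.mk π ⟨ℓ, i⟩))
        (by simp only [h1 ℓ]) (z ℓ) (hf2 _ _ rfl)
      refine ⟨m, hm, ?_⟩
      by_contra hne
      exact hm' (hf1 _ _ (hall m) hne)
    have hfib : ∀ e ∈ F, 2 ≤ ((Finset.univ \ Z).filter (fun q => stepEdge π q = e)).card := by
      intro e he
      by_cases hs : ∃ ℓ, stepEdge π ⟨ℓ, z ℓ⟩ = e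
      · obtain ⟨ℓ, rfl⟩ := hs
        obtain ⟨m, hm, hme⟩ := hother ℓ he
        obtain ⟨-, ℓ', hne, m', hm'⟩ := hz ℓ he
        have hex : ∃ i, i ≠ z ℓ' ∧ stepEdge π ⟨ℓ', i⟩ = stepEdge π ⟨ℓ, z ℓ⟩ := by
          by_cases hmz : m' = z ℓ'
          · subst hmz
            obtain ⟨i, hi, hie⟩ := hother ℓ' (hm' ▸ he)
            exact ⟨i, hi, hie.trans hm'.symm⟩
          · exact ⟨m', hmz, hm'.symm⟩
        obtain ⟨i, hi, hie⟩ := hex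
        refine Finset.one_lt_card.2 ⟨⟨ℓ, m⟩, ?_, ⟨ℓ', i⟩, ?_, ?_⟩
        · simp only [Finset.mem_filter, Finset.mem_sdiff, Finset.mem_univ, true_and]
          exact ⟨fun t => hm (hZm _ _ t), hme⟩
        · simp only [Finset.mem_filter, Finset.mem_sdiff, Finset.mem_univ, true_and]
          exact ⟨fun t => hi (hZm _ _ t), hie⟩
        · intro t
          exact hne (congrArg Sigma.fst t).symm
      · obtain ⟨q₀, -, rfl⟩ := Finset.mem_image.1 (hFE he)
        have := h2 q₀
        rw [Nat.card_eq_fintype_card, Fintype.card_subtype] at this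
        refine this.trans (Finset.card_le_card ?_)
        intro q hq
        simp only [Finset.mem_filter, Finset.mem_sdiff, Finset.mem_univ, true_and] at hq ⊢
        refine ⟨fun t => hs ⟨q.1, ?_⟩, hq⟩
        rw [← hZm q.1 q.2 t]
        exact hq
    have hcount := Finset.mul_card_image_le_card_of_maps_to (f := stepEdge π)
      (s := (Finset.univ \ Z).filter (fun q => stepEdge π q ∈ F)) (t := F)
      (fun q hq => (Finset.mem_filter.1 hq).2) 2 (by
        intro e he
        refine (hfib e he).trans (Finset.card_le_card ?_)
        intro q hq
        simp only [Finset.mem_filter] at hq ⊢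
        exact ⟨⟨hq.1, hq.2 ▸ he⟩, hq.2⟩)
    have hle := hcount.trans (Finset.card_filter_le _ _)
    have hsd := Finset.card_sdiff_add_card_eq_card (Finset.subset_univ Z)
    have hu : (Finset.univ : Finset (WalkStep p k)).card = ∑ ℓ : Fin p, k ℓ := by
      simp [Finset.card_univ]
    omega
end

section
/- Fix an integer p ≥ 1, integers k₁, …, k_p ≥ 1, and reals s₁, …, s_p ∈ [0,1]. Let E be the disjoint union of the sets {0, 1, …, k_ℓ} for ℓ = 1, …, p, writing m̄^ℓ for the element m of the ℓ-th copy. Define s(m̄^ℓ) := s_ℓ if m ∈ {0, k_ℓ} and s(m̄^ℓ) := 1 otherwise. Let π be a partition of E such that 0̄^ℓ and k̄_ℓ^ℓ lie in the same block for every ℓ, and set s_π := ∏_{B block of π} min_{x ∈ B} s(x). For each n, let A(n, π) be the number of families (i_x)_{x ∈ E} ∈ {1, …, n}^E whose level-set partition (x ∼ y iff i_x = i_y) is exactly π and which satisfy 1 ≤ i_{0̄^ℓ} = i_{k̄_ℓ^ℓ} ≤ n s_ℓ for every ℓ = 1, …, p. Then A(n, π)/n^{|π|} → s_π as n → ∞,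 where |π| is the number of blocks of π. -/
open Filter

/-- The weight `s(m̄^ℓ)`: equal to `s_ℓ` if `m ∈ {0, k_ℓ}` and to `1` otherwise. -/
noncomputable def sWeight {p : ℕ} {k : Fin p → ℕ} (s : Fin p → ℝ) (x : WalkIndex p k) : ℝ :=
  if x.2 = 0 ∨ x.2 = Fin.last (k x.1) then s x.1 else 1

/-- `A(n, π)`: the number of families `(i_x)_{x ∈ E} ∈ {1, …, n}^E` whose level-set
partition is exactly `π` and which satisfy `1 ≤ i_{0̄^ℓ} = i_{k̄_ℓ^ℓ} ≤ n s_ℓ` for all `ℓ`. -/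
noncomputable def countA {p : ℕ} {k : Fin p → ℕ} (π : Setoid (WalkIndex p k))
    (s : Fin p → ℝ) (n : ℕ) : ℕ :=
  Nat.card {i : WalkIndex p k → ℕ //
    (∀ x, i x ∈ Finset.Icc 1 n) ∧
    (∀ x y, i x = i y ↔ Quotient.mk π x = Quotient.mk π y) ∧
    (∀ ℓ : Fin p, ((i ⟨ℓ, 0⟩ : ℝ) ≤ n * s ℓ ∧
      i ⟨ℓ, 0⟩ = i ⟨ℓ, Fin.last (k ℓ)⟩))}


open Classical in
lemma aux_tendsto {Q : Type} [Fintype Q] (c : Q → ℝ) (h0 : ∀ b, 0 ≤ c b) (h1 : ∀ b, c b ≤ 1) :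
    Tendsto (fun n : ℕ => ((((Fintype.piFinset (fun b : Q => Finset.Icc 1 ⌊c b * (n : ℝ)⌋₊)).filter
      (fun j => Function.Injective j)).card : ℕ) : ℝ) / (n : ℝ) ^ (Fintype.card Q)) atTop
      (nhds (∏ b, c b)) := by
  have hS : Tendsto (fun n : ℕ => (((Fintype.piFinset
      (fun b : Q => Finset.Icc 1 ⌊c b * (n : ℝ)⌋₊)).card : ℕ) : ℝ) / (n : ℝ) ^ (Fintype.card Q))
      atTop (nhds (∏ b, c b)) := by
    have : Tendsto (fun n : ℕ => ∏ b : Q, ((⌊c b * (n : ℝ)⌋₊ : ℝ) / (n : ℝ))) atTop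
        (nhds (∏ b, c b)) := by
      apply tendsto_finsetProd
      intro b _
      exact (tendsto_nat_floor_mul_div_atTop (h0 b)).comp tendsto_natCast_atTop_atTop
    refine this.congr fun n => ?_
    rw [Finset.prod_div_distrib]
    simp [Fintype.card_piFinset, Finset.card_univ]
  have hE : Tendsto (fun n : ℕ => ((Fintype.card Q : ℝ) * (Fintype.card Q : ℝ)) / (n : ℝ))
      atTop (nhds 0) := tendsto_const_div_atTop_nhds_zero_nat _
  have hL := hS.sub hE
  rw [sub_zero] at hL
  refine tendsto_of_tendsto_of_tendsto_of_le_of_le' hL hS ?_ ?_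
  · filter_upwards [eventually_gt_atTop 0] with n hn
    have hn' : (0 : ℝ) < n := by exact_mod_cast hn
    set S := Fintype.piFinset (fun b : Q => Finset.Icc 1 ⌊c b * (n : ℝ)⌋₊) with hSdef
    have hsub : S ⊆ S.filter (fun j => Function.Injective j) ∪
        (Finset.univ : Finset Q).offDiag.biUnion (fun q => S.filter (fun j => j q.1 = j q.2)) := by
      intro j hj
      by_cases hi : Function.Injective j
      · simp [hj, hi]
      · simp only [Function.Injective, not_forall] at hi
        obtain ⟨a, b, hab, hne⟩ := hi
        simp only [Finset.mem_union, Finset.mem_biUnion, Finset.mem_filter]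
        exact Or.inr ⟨(a, b), by simpa using hne, hj, hab⟩
    have hone : ∀ q ∈ (Finset.univ : Finset Q).offDiag,
        (S.filter (fun j => j q.1 = j q.2)).card ≤ n ^ (Fintype.card Q - 1) := by
      rintro ⟨a, b⟩ hq
      have hne : a ≠ b := by simpa using hq
      have : (Fintype.piFinset (fun _ : {x : Q // x ≠ a} => Finset.Icc 1 n)).card
          = n ^ (Fintype.card Q - 1) := by
        simp [Fintype.card_piFinset, Fintype.card_subtype_compl]
      rw [← this]
      refine Finset.card_le_card_of_injOn (fun j x => j x.1) ?_ ?_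
      · intro j hj
        simp only [Finset.coe_filter, Set.mem_ofPred_eq, hSdef, Fintype.mem_piFinset,
          Finset.mem_Icc] at hj
        simp only [Finset.mem_coe, Fintype.mem_piFinset, Finset.mem_Icc]
        intro x
        refine ⟨(hj.1 x.1).1, (hj.1 x.1).2.trans ?_⟩
        refine Nat.floor_le_of_le ?_
        nlinarith [h1 x.1]
      · intro j hj j' hj' h
        simp only [Finset.coe_filter, Set.mem_ofPred_eq] at hj hj'
        have key : ∀ x, x ≠ a → j x = j' x := fun x hx => congrFun h ⟨x, hx⟩
        funext x
        by_cases hx : x = a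
        · subst hx
          rw [hj.2, hj'.2]
          exact key b hne.symm
        · exact key x hx
    have hcard : S.card ≤ (S.filter (fun j => Function.Injective j)).card +
        (Fintype.card Q * Fintype.card Q) * n ^ (Fintype.card Q - 1) := by
      refine (Finset.card_le_card hsub).trans ((Finset.card_union_le _ _).trans ?_)
      gcongr
      refine (Finset.card_biUnion_le_card_mul _ _ _ hone).trans ?_
      gcongr
      rw [Finset.offDiag_card, Finset.card_univ]
      exact Nat.sub_le _ _
    rcases Nat.eq_zero_or_pos (Fintype.card Q) with h | h
    · rw [h] at hcard ⊢
      simp only [Nat.mul_zero, Nat.zero_mul, add_zero] at hcard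
      simpa using hcard
    · have hc : (S.card : ℝ) ≤ ((S.filter (fun j => Function.Injective j)).card : ℝ) +
        ((Fintype.card Q : ℝ) * Fintype.card Q) * (n : ℝ) ^ (Fintype.card Q - 1) := by
        exact_mod_cast hcard
      have hp : (n : ℝ) ^ (Fintype.card Q) = (n : ℝ) ^ (Fintype.card Q - 1) * n := by
        rw [← pow_succ, Nat.sub_add_cancel h]
      have he : ((Fintype.card Q : ℝ) * Fintype.card Q) / (n : ℝ) =
          ((Fintype.card Q : ℝ) * Fintype.card Q) * (n : ℝ) ^ (Fintype.card Q - 1) /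
            (n : ℝ) ^ (Fintype.card Q) := by
        rw [hp]; field_simp
      rw [he, ← sub_div]
      gcongr
      linarith
  · filter_upwards with n
    gcongr
    exact Finset.filter_subset _ _

theorem stmt_10 (p : ℕ) (hp : 1 ≤ p) (k : Fin p → ℕ) (hk : ∀ ℓ, 1 ≤ k ℓ)
    (s : Fin p → ℝ) (hs : ∀ ℓ, s ℓ ∈ Set.Icc (0 : ℝ) 1)
    (π : Setoid (WalkIndex p k))
    -- `0̄^ℓ` and `k̄_ℓ^ℓ` lie in the same block of `π` for every `ℓ`
    (h1 : ∀ ℓ : Fin p,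
      Quotient.mk π (⟨ℓ, 0⟩ : WalkIndex p k) = Quotient.mk π ⟨ℓ, Fin.last (k ℓ)⟩) :
    -- `A(n, π) / n^{|π|}` converges to `s_π = ∏_{B block of π} min_{x ∈ B} s(x)`
    Tendsto
      (fun n : ℕ => (countA π s n : ℝ) / (n : ℝ) ^ (Nat.card (Quotient π)))
      atTop
      (nhds (∏ᶠ b : Quotient π,
        sInf (sWeight s '' {x : WalkIndex p k | Quotient.mk π x = b}))) := by
  classical
  have : Fintype (Quotient π) := Fintype.ofFinite _
  set c : Quotient π → ℝ := fun b =>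
    sInf (sWeight s '' {x : WalkIndex p k | Quotient.mk π x = b}) with hc
  have hfin : ∀ b, (sWeight s '' {x : WalkIndex p k | Quotient.mk π x = b}).Finite :=
    fun b => Set.toFinite _
  have hmem : ∀ b, ∃ x : WalkIndex p k, Quotient.mk π x = b ∧ sWeight s x = c b := by
    intro b
    have hne : (sWeight s '' {x : WalkIndex p k | Quotient.mk π x = b}).Nonempty := by
      obtain ⟨x, hx⟩ := Quotient.exists_rep b
      exact ⟨_, x, hx, rfl⟩
    obtain ⟨x, hx, hx'⟩ := hne.csInf_mem (hfin b)
    exact ⟨x, hx, hx'⟩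
  have hle : ∀ x : WalkIndex p k, c (Quotient.mk π x) ≤ sWeight s x := fun x =>
    csInf_le (hfin _).bddBelow ⟨x, rfl, rfl⟩
  have hw : ∀ x : WalkIndex p k, 0 ≤ sWeight s x ∧ sWeight s x ≤ 1 := by
    intro x
    unfold sWeight
    split_ifs
    · exact hs _
    · norm_num
  have hc0 : ∀ b, 0 ≤ c b := fun b => by
    obtain ⟨x, -, hx⟩ := hmem b
    rw [← hx]; exact (hw x).1
  have hc1 : ∀ b, c b ≤ 1 := fun b => by
    obtain ⟨x, -, hx⟩ := hmem b
    rw [← hx]; exact (hw x).2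
  rw [finprod_eq_prod_of_fintype, Nat.card_eq_fintype_card]
  refine (aux_tendsto c hc0 hc1).congr fun n => ?_
  congr 2
  set T := (Fintype.piFinset (fun b : Quotient π => Finset.Icc 1 ⌊c b * (n : ℝ)⌋₊)).filter
      (fun j => Function.Injective j) with hT
  have hg : Function.Injective
      (fun (j : Quotient π → ℕ) (x : WalkIndex p k) => j (Quotient.mk π x)) := by
    intro j j' h
    funext b
    obtain ⟨x, rfl⟩ := Quotient.exists_rep b
    exact congrFun h x
  suffices hmain : T.card = countA π s n by
    rw [← hmain, hT]
    congr!
  rw [← Finset.card_image_of_injective T hg]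
  unfold countA
  refine (Nat.subtype_card _ fun i => ?_).symm
  simp only [Finset.mem_image, hT,
    Finset.mem_filter, Fintype.mem_piFinset]
  constructor
  · rintro ⟨j, ⟨hj, hinj⟩, rfl⟩
    have hjle : ∀ b, (j b : ℝ) ≤ c b * n := fun b =>
      (Nat.le_floor_iff (mul_nonneg (hc0 b) (Nat.cast_nonneg n))).1 (Finset.mem_Icc.1 (hj b)).2
    refine ⟨fun x => ?_, fun x y => hinj.eq_iff, fun ℓ => ⟨?_, ?_⟩⟩
    · refine Finset.mem_Icc.2 ⟨(Finset.mem_Icc.1 (hj _)).1, ?_⟩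
      have h2 := hjle (Quotient.mk π x)
      have h3 : c (Quotient.mk π x) * n ≤ 1 * n :=
        mul_le_mul_of_nonneg_right (hc1 _) (Nat.cast_nonneg n)
      have : (j (Quotient.mk π x) : ℝ) ≤ n := by linarith
      exact_mod_cast this
    · have h2 := hjle (Quotient.mk π (⟨ℓ, 0⟩ : WalkIndex p k))
      have h3 := hle (⟨ℓ, 0⟩ : WalkIndex p k)
      have h4 : sWeight s (⟨ℓ, 0⟩ : WalkIndex p k) = s ℓ := by simp [sWeight]
      rw [h4] at h3
      rw [mul_comm]
      exact h2.trans (mul_le_mul_of_nonneg_right h3 (Nat.cast_nonneg n))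
    · exact congrArg j (h1 ℓ)
  · rintro ⟨hi1, hi2, hi3⟩
    have hxle : ∀ x, (i x : ℝ) ≤ sWeight s x * n := by
      intro x
      unfold sWeight
      split_ifs with h
      · rw [mul_comm]
        obtain ⟨ℓ, m⟩ := x
        rcases h with h | h
        · have h' : m = (0 : Fin (k ℓ + 1)) := h
          rw [h']; exact (hi3 ℓ).1
        · have h' : m = Fin.last (k ℓ) := h
          rw [h', ← (hi3 ℓ).2]; exact (hi3 ℓ).1
      · rw [one_mul]; exact_mod_cast (Finset.mem_Icc.1 (hi1 x)).2
    refine ⟨Quotient.lift i (fun x y h => (hi2 x y).2 (Quotient.sound h)), ⟨fun b => ?_, ?_⟩, ?_⟩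
    · obtain ⟨x, rfl, hx⟩ := hmem b
      refine Finset.mem_Icc.2 ⟨(Finset.mem_Icc.1 (hi1 x)).1, ?_⟩
      refine Nat.le_floor ?_
      rw [← hx]
      exact hxle x
    · intro a b
      induction a using Quotient.inductionOn
      induction b using Quotient.inductionOn
      exact (hi2 _ _).1
    · rfl
end

section
/- There exists a constant C < ∞ such that for every n ≥ 2, if U = [u_{i,j}]_{i,j=1}^n is a Haar-distributed random matrix on the unitary group U(n), then for all subsets I, J ⊆ {1, …, n}, E[ ( ∑_{i ∈ I, j ∈ J} (|u_{i,j}|² − 1/n) )² ] ≤ C |I| |J| / n². -/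
open MeasureTheory

/-- The Borel measurable structure on matrices (entrywise). -/
noncomputable instance matrixMeasurableSpace (n : ℕ) :
    MeasurableSpace (Matrix (Fin n) (Fin n) ℂ) :=
  inferInstanceAs (MeasurableSpace (Fin n → Fin n → ℂ))

section Abstract

/-- Abstract second-moment argument. -/
theorem abstract_bound {Ω : Type*} [MeasurableSpace Ω] (μ : Measure Ω) [IsProbabilityMeasure μ]
    (n : ℕ) (hn : 2 ≤ n) (m : ℝ) (hm : 0 ≤ m) (X : Fin n → Ω → ℝ) (q : Fin n → Fin n → Ω → ℝ)
    (iX : ∀ i, Integrable (X i) μ)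
    (iXX : ∀ i k, Integrable (fun ω => X i ω * X k ω) μ)
    (iq : ∀ i k, Integrable (q i k) μ)
    (h1 : ∀ ω, ∑ i, X i ω = m)
    (h2 : ∀ ω, ∑ i, ∑ k, q i k ω = m)
    (hq : ∀ i ω, q i i ω = X i ω * X i ω)
    (e1 : ∀ i k, ∫ ω, X i ω ∂μ = ∫ ω, X k ω ∂μ)
    (e2 : ∀ i k, ∫ ω, X i ω * X i ω ∂μ = ∫ ω, X k ω * X k ω ∂μ)
    (e3 : ∀ i k l, i ≠ k → i ≠ l → ∫ ω, X i ω * X k ω ∂μ = ∫ ω, X i ω * X l ω ∂μ)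
    (e4 : ∀ i k, i ≠ k → 4 * ∫ ω, X i ω * X i ω ∂μ =
      ∫ ω, X i ω * X i ω ∂μ + ∫ ω, X k ω * X k ω ∂μ + 2 * ∫ ω, X i ω * X k ω ∂μ
        + 2 * ∫ ω, q i k ω ∂μ)
    (I : Finset (Fin n)) :
    ∫ ω, (∑ i ∈ I, (X i ω - m / n)) ^ 2 ∂μ ≤ I.card * m / n ^ 2 := by
  have hn0 : (2 : ℝ) ≤ n := by exact_mod_cast hn
  let i0 : Fin n := ⟨0, by omega⟩
  -- first moment
  have hE : ∀ i, ∫ ω, X i ω ∂μ = m / n := by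
    intro i
    have : ∑ k, ∫ ω, X k ω ∂μ = m := by
      rw [← integral_finsetSum _ (fun k _ => iX k)]
      simp [h1]
    rw [Finset.sum_congr rfl (fun k _ => e1 k i)] at this
    simp at this
    field_simp
    linarith
  -- second moment
  have hcov : ∀ i k, ∫ ω, (X i ω - m / n) * (X k ω - m / n) ∂μ
      = ∫ ω, X i ω * X k ω ∂μ - m ^ 2 / n ^ 2 := by
    intro i k
    have : ∀ ω, (X i ω - m / n) * (X k ω - m / n)
      = X i ω * X k ω - (m / n) * X i ω - (m / n) * X k ω + m ^ 2 / n ^ 2 := by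
      intro ω; ring
    simp_rw [this]
    have j1 := (iX i).const_mul (m / n)
    have j2 := (iX k).const_mul (m / n)
    have j3 : Integrable (fun ω => X i ω * X k ω - (m / n) * X i ω) μ := (iXX i k).sub j1
    have j4 : Integrable (fun ω => X i ω * X k ω - (m / n) * X i ω - (m / n) * X k ω) μ := j3.sub j2
    rw [integral_add j4 (integrable_const _), integral_sub j3 j2, integral_sub (iXX i k) j1,
      integral_const_mul, integral_const_mul, hE, hE]
    simp
    ring
  have hrow : ∀ i, ∑ k, ∫ ω, X i ω * X k ω ∂μ = m ^ 2 / n := by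
    intro i
    rw [← integral_finsetSum _ (fun k _ => iXX i k)]
    simp_rw [← Finset.mul_sum, h1]
    rw [integral_mul_const, hE]; ring
  set a := ∫ ω, X i0 ω * X i0 ω ∂μ with ha
  have hai : ∀ i, ∫ ω, X i ω * X i ω ∂μ = a := fun i => e2 i i0
  have hqs : ∑ i, ∑ k, ∫ ω, q i k ω ∂μ = m := by
    have : ∀ i, ∑ k, ∫ ω, q i k ω ∂μ = ∫ ω, ∑ k, q i k ω ∂μ := fun i =>
      (integral_finsetSum _ (fun k _ => iq i k)).symm
    simp_rw [this]
    rw [← integral_finsetSum _ (fun i _ => integrable_finsetSum _ (fun k _ => iq i k))]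
    simp [h2]
  have hbc : ∀ i k, ∫ ω, X i ω * X k ω ∂μ + ∫ ω, q i k ω ∂μ = a + if i = k then a else 0 := by
    intro i k
    by_cases h : i = k
    · subst h
      simp [hq, hai]
    · have := e4 i k h
      rw [hai, hai] at this
      simp [h]
      linarith
  have hA : m ^ 2 + m = n * (n + 1) * a := by
    have h3 : ∑ i, ∑ k, (∫ ω, X i ω * X k ω ∂μ + ∫ ω, q i k ω ∂μ) = m ^ 2 + m := by
      simp_rw [Finset.sum_add_distrib]
      rw [hqs]
      simp_rw [hrow]
      simp
      field_simp
    simp_rw [hbc] at h3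
    simp [Finset.sum_add_distrib] at h3
    rw [← h3]; ring
  have hvar : ∀ i, ∫ ω, (X i ω - m / n) * (X i ω - m / n) ∂μ ≤ m / n ^ 2 := by
    intro i
    rw [hcov, hai]
    have : a = (m ^ 2 + m) / (n * (n + 1)) := by
      field_simp; linarith
    rw [this, sub_le_iff_le_add, ← add_div, div_le_div_iff₀ (by positivity) (by positivity)]
    have : 0 ≤ (m ^ 2 + m) * n := by positivity
    nlinarith
  have hneg : ∀ i k, i ≠ k → ∫ ω, (X i ω - m / n) * (X k ω - m / n) ∂μ ≤ 0 := by
    intro i k hik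
    have hpos : 0 ≤ ∫ ω, (X i ω - m / n) * (X i ω - m / n) ∂μ :=
      integral_nonneg (fun ω => mul_self_nonneg _)
    rw [hcov] at hpos ⊢
    have hr := hrow i
    rw [← Finset.add_sum_erase _ _ (Finset.mem_univ i)] at hr
    rw [Finset.sum_congr rfl (fun l hl => e3 i l k (Finset.ne_of_mem_erase hl).symm hik)] at hr
    simp [Finset.card_erase_of_mem] at hr
    rw [Nat.cast_sub (by omega)] at hr
    push_cast at hr
    set b := ∫ ω, X i ω * X k ω ∂μ
    set aa := ∫ ω, X i ω * X i ω ∂μ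
    have h5 : (n - 1 : ℝ) * (b - m ^ 2 / n ^ 2) = - (aa - m ^ 2 / n ^ 2) := by
      have : m ^ 2 / n = n * (m ^ 2 / n ^ 2) := by field_simp
      linarith
    nlinarith
  have iYY : ∀ i k, Integrable (fun ω => (X i ω - m / n) * (X k ω - m / n)) μ := by
    intro i k
    have : (fun ω => (X i ω - m / n) * (X k ω - m / n))
      = fun ω => X i ω * X k ω - (m / n) * X i ω - (m / n) * X k ω + m ^ 2 / n ^ 2 := by
      funext ω; ring
    rw [this]
    exact (((iXX i k).sub ((iX i).const_mul _)).sub ((iX k).const_mul _)).add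
      (integrable_const _)
  simp_rw [sq (∑ i ∈ I, (X i _ - m / n)), Finset.sum_mul_sum]
  rw [integral_finsetSum _ (fun i _ => integrable_finsetSum _ (fun k _ => iYY i k))]
  simp_rw [integral_finsetSum I (fun k _ => iYY _ k)]
  calc _ ≤ ∑ i ∈ I, m / n ^ 2 := by
        apply Finset.sum_le_sum
        intro i hi
        rw [← Finset.add_sum_erase _ _ hi]
        have := hvar i
        have h7 : ∑ k ∈ I.erase i, ∫ ω, (X i ω - m / n) * (X k ω - m / n) ∂μ ≤ 0 :=
          Finset.sum_nonpos (fun k hk => hneg i k (Finset.ne_of_mem_erase hk).symm)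
        linarith
    _ = _ := by simp; ring

end Abstract

section Concrete

open ComplexConjugate

/-- A unitary matrix acting in the coordinates `i, k` by a complex reflection. -/
theorem exists_reflection (n : ℕ) (i k : Fin n) (hik : i ≠ k) (c w : ℂ)
    (hw : w * conj w = 1) (hc : c + conj c = 2 * (c * conj c)) :
    ∃ V : Matrix.unitaryGroup (Fin n) ℂ, ∀ (U : Matrix.unitaryGroup (Fin n) ℂ) (a j : Fin n),
      ((V * U : Matrix.unitaryGroup (Fin n) ℂ) : Matrix (Fin n) (Fin n) ℂ) a j =
        U.1 a j - c * ((if a = i then 1 else 0) - if a = k then w else 0)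
          * (U.1 i j - conj w * U.1 k j) := by
  let v : Fin n → ℂ := Pi.single i 1 - Pi.single k w
  let N : Matrix (Fin n) (Fin n) ℂ := Matrix.vecMulVec v (star v)
  have hvv : star v ⬝ᵥ v = 2 := by
    have h1 : star v = Pi.single i 1 - Pi.single k (conj w) := by
      simp [v, star_sub, ← Pi.single_star]
    rw [h1]
    simp [v, sub_dotProduct, hik, hik.symm]
    rw [mul_comm, hw]; norm_num
  have hNN : N * N = (2 : ℂ) • N := by
    simp only [N, Matrix.vecMulVec_mul_vecMulVec, hvv]
    ext; simp [Matrix.vecMulVec_apply]; ring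
  have hNs : star N = N := by
    ext a b
    simp [N, Matrix.star_apply, Matrix.vecMulVec_apply, mul_comm]
  have hV : (1 - c • N) ∈ Matrix.unitaryGroup (Fin n) ℂ := by
    rw [Matrix.mem_unitaryGroup_iff]
    rw [star_sub, star_smul, hNs, star_one, mul_sub, sub_mul, sub_mul, smul_mul_smul_comm, hNN,
      smul_smul]
    simp only [one_mul, mul_one]
    have : c * star c * 2 = c + star c := by
      change c * conj c * 2 = c + conj c
      rw [hc]; ring
    rw [this, add_smul]
    abel
  refine ⟨⟨_, hV⟩, fun U a j => ?_⟩
  have h1 : star v = Pi.single i 1 - Pi.single k (conj w) := by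
    simp [v, star_sub, ← Pi.single_star]
  change ((1 - c • N) * U.1) a j = _
  rw [sub_mul, one_mul, smul_mul_assoc, Matrix.sub_apply, Matrix.smul_apply,
    Matrix.vecMulVec_mul, Matrix.vecMulVec_apply, h1, Matrix.sub_vecMul]
  simp [v, Pi.single_apply, Matrix.single_vecMul]
  ring

variable {n : ℕ}

/-- squared norm of the part of row `i` in the columns `J` -/
noncomputable def rowX (J : Finset (Fin n)) (i : Fin n)
    (U : Matrix.unitaryGroup (Fin n) ℂ) : ℝ := ∑ j ∈ J, ‖U.1 i j‖ ^ 2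

/-- inner product of rows in the columns `J` -/
noncomputable def rowP (J : Finset (Fin n)) (i k : Fin n)
    (U : Matrix.unitaryGroup (Fin n) ℂ) : ℂ := ∑ j ∈ J, U.1 i j * conj (U.1 k j)

theorem meas_entry (i j : Fin n) :
    Measurable (fun U : Matrix.unitaryGroup (Fin n) ℂ => U.1 i j) := by
  have h : Measurable (fun M : Matrix (Fin n) (Fin n) ℂ => M i j) :=
    (measurable_pi_apply j).comp (measurable_pi_apply (X := fun _ => Fin n → ℂ) i)
  exact h.comp measurable_subtype_coe

theorem meas_mul (V : Matrix.unitaryGroup (Fin n) ℂ) :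
    Measurable (fun U : Matrix.unitaryGroup (Fin n) ℂ => V * U) := by
  apply Measurable.subtype_mk (f := fun U : Matrix.unitaryGroup (Fin n) ℂ => V.1 * U.1)
  refine measurable_pi_iff.2 fun i => measurable_pi_iff.2 fun j => ?_
  simp only [Matrix.mul_apply]
  exact Finset.measurable_sum _ (fun k _ => (meas_entry k j).const_mul _)

theorem meas_rowX (J : Finset (Fin n)) (i : Fin n) : Measurable (rowX J i) :=
  Finset.measurable_sum _ (fun j _ => (meas_entry i j).norm.pow_const 2)

theorem meas_rowP (J : Finset (Fin n)) (i k : Fin n) : Measurable (rowP J i k) :=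
  Finset.measurable_sum _ (fun j _ => (meas_entry i j).mul
    (Complex.continuous_conj.measurable.comp (meas_entry k j)))

theorem bound_rowX (J : Finset (Fin n)) (i : Fin n) (U) : ‖rowX J i U‖ ≤ J.card := by
  unfold rowX
  refine (norm_sum_le _ _).trans ?_
  have : ∀ j ∈ J, ‖‖U.1 i j‖ ^ 2‖ ≤ 1 := by
    intro j _
    have := entry_norm_bound_of_unitary U.2 i j
    rw [norm_pow, norm_norm]
    exact pow_le_one₀ (norm_nonneg _) this
  simpa using Finset.sum_le_sum this

theorem bound_rowP (J : Finset (Fin n)) (i k : Fin n) (U) : ‖rowP J i k U‖ ≤ J.card := by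
  unfold rowP
  refine (norm_sum_le _ _).trans ?_
  have : ∀ j ∈ J, ‖U.1 i j * conj (U.1 k j)‖ ≤ 1 := by
    intro j _
    have h1 := entry_norm_bound_of_unitary U.2 i j
    have h2 := entry_norm_bound_of_unitary U.2 k j
    rw [norm_mul, RCLike.norm_conj]
    exact mul_le_one₀ h1 (norm_nonneg _) h2
  simpa using Finset.sum_le_sum this

theorem col_orth (U : Matrix.unitaryGroup (Fin n) ℂ) (j l : Fin n) :
    ∑ i, conj (U.1 i j) * U.1 i l = if j = l then 1 else 0 := by
  have := congrFun (congrFun (Matrix.mem_unitaryGroup_iff'.1 U.2) j) l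
  simpa [Matrix.mul_apply, Matrix.one_apply, Matrix.star_apply] using this

theorem sum_rowX (J : Finset (Fin n)) (U) : ∑ i, rowX J i U = J.card := by
  unfold rowX
  rw [Finset.sum_comm]
  have : ∀ j, ∑ i, ‖U.1 i j‖ ^ 2 = 1 := by
    intro j
    have := col_orth U j j
    simp only [Complex.conj_mul'] at this
    simp at this
    exact_mod_cast this
  simp [this]

theorem sum_rowP (J : Finset (Fin n)) (U) :
    ∑ i, ∑ k, ‖rowP J i k U‖ ^ 2 = (J.card : ℝ) := by
  have h : ∑ i, ∑ k, (conj (rowP J i k U) * rowP J i k U) = (J.card : ℂ) := by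
    unfold rowP
    simp only [map_sum, Finset.sum_mul_sum]
    have : ∑ i, ∑ k, ∑ j ∈ J, ∑ l ∈ J, conj (U.1 i j * conj (U.1 k j)) * (U.1 i l * conj (U.1 k l))
        = ∑ j ∈ J, ∑ l ∈ J, (∑ i, conj (U.1 i j) * U.1 i l) * (∑ k, conj (U.1 k l) * U.1 k j) := by
      simp_rw [Finset.sum_mul_sum]
      rw [Finset.sum_congr rfl (fun i _ => Finset.sum_comm), Finset.sum_comm]
      refine Finset.sum_congr rfl fun j _ => ?_
      rw [Finset.sum_congr rfl (fun i _ => Finset.sum_comm), Finset.sum_comm]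
      refine Finset.sum_congr rfl fun l _ => ?_
      refine Finset.sum_congr rfl fun i _ => Finset.sum_congr rfl fun k _ => ?_
      simp
      ring
    rw [this]
    simp_rw [col_orth]
    simp
  simp only [Complex.conj_mul'] at h
  exact_mod_cast h

theorem rowP_self (J : Finset (Fin n)) (i : Fin n) (U) :
    ‖rowP J i i U‖ ^ 2 = rowX J i U * rowX J i U := by
  have : rowP J i i U = (rowX J i U : ℂ) := by
    unfold rowP rowX
    simp [Complex.mul_conj']
  rw [this, Complex.norm_real, Real.norm_eq_abs, sq_abs, sq]

theorem haar_integral_inv (μ : Measure (Matrix.unitaryGroup (Fin n) ℂ)) (hμ : μ.IsMulLeftInvariant)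
    (V : Matrix.unitaryGroup (Fin n) ℂ) (f : Matrix.unitaryGroup (Fin n) ℂ → ℝ)
    (hf : Measurable f) : ∫ U, f (V * U) ∂μ = ∫ U, f U ∂μ := by
  conv_rhs => rw [← hμ.map_mul_left_eq_self V]
  rw [integral_map (meas_mul V).aemeasurable hf.aestronglyMeasurable]

theorem exists_row_swap (J : Finset (Fin n)) (i k : Fin n) (hik : i ≠ k) :
    ∃ V : Matrix.unitaryGroup (Fin n) ℂ, ∀ U, rowX J i (V * U) = rowX J k U ∧
      ∀ l, l ≠ i → l ≠ k → rowX J l (V * U) = rowX J l U := by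
  obtain ⟨V, hV⟩ := exists_reflection n i k hik 1 1 (by simp) (by simp; norm_num)
  refine ⟨V, fun U => ⟨?_, fun l h1 h2 => ?_⟩⟩
  · unfold rowX
    simp [hV, hik]
  · unfold rowX
    simp [hV, h1, h2]

theorem exists_rot (J : Finset (Fin n)) (i k : Fin n) (hik : i ≠ k) (w : ℂ)
    (hw : w * conj w = 1) :
    ∃ V : Matrix.unitaryGroup (Fin n) ℂ, ∀ U, rowX J i (V * U) =
      (rowX J i U + rowX J k U) / 2 + (Complex.I * w * rowP J i k U).re := by
  obtain ⟨V, hV⟩ := exists_reflection n i k hik ((1 - Complex.I) / 2) w hw (by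
    have h2 : conj (2 : ℂ) = 2 := Complex.conj_ofNat 2
    rw [map_div₀, h2]
    apply Complex.ext <;> simp <;> norm_num)
  refine ⟨V, fun U => ?_⟩
  unfold rowX rowP
  rw [← Finset.sum_add_distrib, Finset.sum_div, Finset.mul_sum, Complex.re_sum,
    ← Finset.sum_add_distrib]
  refine Finset.sum_congr rfl fun j _ => ?_
  rw [hV]
  simp only [hik, if_true, if_false, ← Complex.normSq_eq_norm_sq]
  have hw' : w.re ^ 2 + w.im ^ 2 = 1 := by
    have := congrArg Complex.re hw
    simp at this
    linarith
  simp [Complex.normSq_apply]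
  generalize (U.1 i j).re = a
  generalize (U.1 i j).im = b
  generalize (U.1 k j).re = c
  generalize (U.1 k j).im = d
  linear_combination ((c ^ 2 + d ^ 2) / 2) * hw'

theorem main_rot (μ : Measure (Matrix.unitaryGroup (Fin n) ℂ)) [IsProbabilityMeasure μ]
    (hμ : μ.IsMulLeftInvariant)
    (J : Finset (Fin n)) (i k : Fin n) (hik : i ≠ k)
    (iXX : ∀ i k, Integrable (fun U => rowX J i U * rowX J k U) μ)
    (iq : ∀ i k, Integrable (fun U => ‖rowP J i k U‖ ^ 2) μ) :
    4 * ∫ U, rowX J i U * rowX J i U ∂μ =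
      ∫ U, rowX J i U * rowX J i U ∂μ + ∫ U, rowX J k U * rowX J k U ∂μ
        + 2 * ∫ U, rowX J i U * rowX J k U ∂μ + 2 * ∫ U, ‖rowP J i k U‖ ^ 2 ∂μ := by
  obtain ⟨V1, h1⟩ := exists_rot J i k hik 1 (by simp)
  obtain ⟨V2, h2⟩ := exists_rot J i k hik (-1) (by simp)
  obtain ⟨V3, h3⟩ := exists_rot J i k hik Complex.I (by simp)
  obtain ⟨V4, h4⟩ := exists_rot J i k hik (-Complex.I) (by simp)
  have mf : Measurable (fun U => rowX J i U * rowX J i U) := (meas_rowX J i).mul (meas_rowX J i)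
  have hV : ∀ V, ∫ U, rowX J i (V * U) * rowX J i (V * U) ∂μ = ∫ U, rowX J i U * rowX J i U ∂μ :=
    fun V => haar_integral_inv μ hμ V _ mf
  have iV : ∀ V, Integrable (fun U => rowX J i (V * U) * rowX J i (V * U)) μ := by
    intro V
    refine Integrable.of_bound (C := (J.card : ℝ) * J.card)
      (mf.comp (meas_mul V)).aestronglyMeasurable (ae_of_all _ fun U => ?_)
    rw [norm_mul]
    exact mul_le_mul (bound_rowX _ _ _) (bound_rowX _ _ _) (norm_nonneg _) (by positivity)
  have hsum : ∀ U, rowX J i (V1 * U) * rowX J i (V1 * U) + rowX J i (V2 * U) * rowX J i (V2 * U)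
      + (rowX J i (V3 * U) * rowX J i (V3 * U) + rowX J i (V4 * U) * rowX J i (V4 * U))
      = rowX J i U * rowX J i U + rowX J k U * rowX J k U + (2 * (rowX J i U * rowX J k U)
        + 2 * ‖rowP J i k U‖ ^ 2) := by
    intro U
    rw [h1, h2, h3, h4, ← Complex.normSq_eq_norm_sq, Complex.normSq_apply]
    simp
    ring
  have := integral_congr_ae (μ := μ) (ae_of_all _ hsum)
  have a1 := (iV V1).add (iV V2)
  have a2 := (iV V3).add (iV V4)
  have a3 := (iXX i i).add (iXX k k)
  have a4 := ((iXX i k).const_mul 2).add ((iq i k).const_mul 2)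
  have l1 := integral_add a1 a2
  have l2 := integral_add a3 a4
  have l3 := integral_add (iV V1) (iV V2)
  have l4 := integral_add (iV V3) (iV V4)
  have l5 := integral_add (iXX i i) (iXX k k)
  have l6 := integral_add ((iXX i k).const_mul 2) ((iq i k).const_mul 2)
  rw [integral_const_mul, integral_const_mul] at l6
  simp only [hV] at l3 l4
  simp only [Pi.add_apply] at l1 l2
  linarith

end Concrete

/-- For `U = [u_{i,j}]` Haar-distributed on the unitary group `U(n)` (`n ≥ 2`), i.e.
distributed according to the unique left-invariant Borel probability measure, one has
`E[(∑_{i ∈ I, j ∈ J} (|u_{i,j}|² - 1/n))²] ≤ C |I| |J| / n²` for a constant `C`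
independent of everything. -/
theorem stmt_14 :
    ∃ C : ℝ, ∀ n : ℕ, 2 ≤ n →
      ∀ μ : Measure (Matrix.unitaryGroup (Fin n) ℂ), IsProbabilityMeasure μ →
        μ.IsMulLeftInvariant →
      ∀ I J : Finset (Fin n),
        (∫ U, (∑ i ∈ I, ∑ j ∈ J,
            (‖(U : Matrix (Fin n) (Fin n) ℂ) i j‖ ^ 2 - 1 / n)) ^ 2 ∂μ)
          ≤ C * I.card * J.card / n ^ 2 := by
  refine ⟨1, fun n hn μ hP hμ I J => ?_⟩
  have iX : ∀ i, Integrable (rowX J i) μ := fun i =>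
    Integrable.of_bound (C := (J.card : ℝ)) (meas_rowX J i).aestronglyMeasurable
      (ae_of_all _ fun U => bound_rowX J i U)
  have mXX : ∀ i k, Measurable (fun U => rowX J i U * rowX J k U) :=
    fun i k => (meas_rowX J i).mul (meas_rowX J k)
  have iXX : ∀ i k, Integrable (fun U => rowX J i U * rowX J k U) μ := by
    intro i k
    refine Integrable.of_bound (C := (J.card : ℝ) * J.card)
      (mXX i k).aestronglyMeasurable (ae_of_all _ fun U => ?_)
    rw [norm_mul]
    exact mul_le_mul (bound_rowX _ _ _) (bound_rowX _ _ _) (norm_nonneg _) (by positivity)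
  have iq : ∀ i k, Integrable (fun U => ‖rowP J i k U‖ ^ 2) μ := by
    intro i k
    refine Integrable.of_bound (C := (J.card : ℝ) ^ 2)
      ((meas_rowP J i k).norm.pow_const 2).aestronglyMeasurable (ae_of_all _ fun U => ?_)
    rw [norm_pow, norm_norm]
    exact pow_le_pow_left₀ (norm_nonneg _) (bound_rowP _ _ _ _) _
  have key := abstract_bound μ n hn (J.card : ℝ) (by positivity) (rowX J)
    (fun i k U => ‖rowP J i k U‖ ^ 2) iX iXX iq (sum_rowX J) (sum_rowP J) (rowP_self J)
    (by
      intro i k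
      by_cases h : i = k
      · rw [h]
      obtain ⟨V, hV⟩ := exists_row_swap J i k h
      rw [← haar_integral_inv μ hμ V _ (meas_rowX J i)]
      simp only [fun U => (hV U).1])
    (by
      intro i k
      by_cases h : i = k
      · rw [h]
      obtain ⟨V, hV⟩ := exists_row_swap J i k h
      rw [← haar_integral_inv μ hμ V _ (mXX i i)]
      simp only [fun U => (hV U).1])
    (by
      intro i k l hik hil
      by_cases h : k = l
      · rw [h]
      obtain ⟨V, hV⟩ := exists_row_swap J k l h
      rw [← haar_integral_inv μ hμ V _ (mXX i k)]
      simp only [fun U => (hV U).1, fun U => (hV U).2 i hik hil])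
    (fun i k h => main_rot μ hμ J i k h iXX iq) I
  have e : ∀ U : Matrix.unitaryGroup (Fin n) ℂ, ∀ i, ∑ j ∈ J,
      (‖(U : Matrix (Fin n) (Fin n) ℂ) i j‖ ^ 2 - 1 / (n : ℝ)) = rowX J i U - J.card / n := by
    intro U i
    unfold rowX
    rw [Finset.sum_sub_distrib]
    simp
    ring
  simp only [e]
  rw [one_mul]
  exact key
end
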